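/- arXiv:0808.3262 — 11 statements merged into one kernel-verified Lean document; each statement's English description precedes it below -/
import Mathlib

section
/- Let L be a Lie algebra over a field F, let I be an ideal of L, and let D be a derivation of L. Then for every natural number n, the F-subspace I + D(I) + D²(I) + ⋯ + Dⁿ(I) (the span of I together with the images of I under the first n powers of D) is an ideal of L. -/
theorem aux_map (F L : Type*) [Field F] [LieRing L] [LieAlgebra F L]
    (I : LieIdeal F L) (D : LieDerivation F L L) (n : ℕ) (z : L)
    (hz : z ∈ ⨆ j ∈ Finset.range (n + 1),
          Submodule.map (D.toLinearMap ^ j) I.toSubmodule) :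
    D z ∈ ⨆ j ∈ Finset.range (n + 1 + 1),
          Submodule.map (D.toLinearMap ^ j) I.toSubmodule := by
  have h : (⨆ j ∈ Finset.range (n + 1), Submodule.map (D.toLinearMap ^ j) I.toSubmodule) ≤
      Submodule.comap D.toLinearMap (⨆ j ∈ Finset.range (n + 1 + 1),
          Submodule.map (D.toLinearMap ^ j) I.toSubmodule) := by
    refine iSup₂_le fun j hj => ?_
    rintro _ ⟨y, hy, rfl⟩
    have hj' : j + 1 ∈ Finset.range (n + 1 + 1) := by
      simp only [Finset.mem_range] at hj ⊢; omega
    refine le_iSup₂ (f := fun j (_ : j ∈ Finset.range (n + 1 + 1)) =>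
      Submodule.map (D.toLinearMap ^ j) I.toSubmodule) (j + 1) hj' ?_
    exact ⟨y, hy, by rw [pow_succ']; rfl⟩
  exact h hz

theorem aux_mono (F L : Type*) [Field F] [LieRing L] [LieAlgebra F L]
    (I : LieIdeal F L) (D : LieDerivation F L L) {m n : ℕ} (h : m ≤ n) :
    (⨆ j ∈ Finset.range (m + 1), Submodule.map (D.toLinearMap ^ j) I.toSubmodule) ≤
    ⨆ j ∈ Finset.range (n + 1), Submodule.map (D.toLinearMap ^ j) I.toSubmodule :=
  biSup_mono fun j hj => by
    simp only [Finset.mem_range] at hj ⊢; omega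

theorem aux_lie (F L : Type*) [Field F] [LieRing L] [LieAlgebra F L]
    (I : LieIdeal F L) (D : LieDerivation F L L) (k : ℕ) (y : L) (hy : y ∈ I) :
    ∀ x : L, ⁅x, (D.toLinearMap ^ k) y⁆ ∈ ⨆ j ∈ Finset.range (k + 1),
          Submodule.map (D.toLinearMap ^ j) I.toSubmodule := by
  induction k with
  | zero =>
    intro x
    refine le_iSup₂ (f := fun j (_ : j ∈ Finset.range (0 + 1)) =>
      Submodule.map (D.toLinearMap ^ j) I.toSubmodule) 0 (by simp) ?_
    exact ⟨⁅x, y⁆, I.lie_mem hy, by simp⟩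
  | succ k ih =>
    intro x
    have e : ⁅x, (D.toLinearMap ^ (k + 1)) y⁆ =
        D ⁅x, (D.toLinearMap ^ k) y⁆ - ⁅D x, (D.toLinearMap ^ k) y⁆ := by
      have e1 : (D.toLinearMap ^ (k + 1)) y = D ((D.toLinearMap ^ k) y) := by
        rw [pow_succ']; rfl
      rw [e1, LieDerivation.apply_lie_eq_add]
      abel
    rw [e]
    exact Submodule.sub_mem _ (aux_map F L I D k _ (ih x))
      (aux_mono F L I D (Nat.le_succ k) (ih (D x)))

/-- Let `L` be a Lie algebra over a field `F`, let `I` be an ideal of `L`,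
and let `D` be a derivation of `L`. Then for every natural number `n`, the `F`-subspace
`I + D(I) + D²(I) + ⋯ + Dⁿ(I)` is an ideal of `L`. -/
theorem statement0 (F L : Type*) [Field F] [LieRing L] [LieAlgebra F L]
    (I : LieIdeal F L) (D : LieDerivation F L L) (n : ℕ) :
    ∃ J : LieIdeal F L,
      J.toSubmodule =
        ⨆ j ∈ Finset.range (n + 1),
          Submodule.map (D.toLinearMap ^ j) I.toSubmodule := by
  refine ⟨{ (⨆ j ∈ Finset.range (n + 1),
          Submodule.map (D.toLinearMap ^ j) I.toSubmodule : Submodule F L) with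
            lie_mem := ?_ }, rfl⟩
  intro x m hm
  have h : (⨆ j ∈ Finset.range (n + 1), Submodule.map (D.toLinearMap ^ j) I.toSubmodule) ≤
      Submodule.comap (LieAlgebra.ad F L x) (⨆ j ∈ Finset.range (n + 1),
          Submodule.map (D.toLinearMap ^ j) I.toSubmodule) := by
    refine iSup₂_le fun j hj => ?_
    rintro _ ⟨y, hy, rfl⟩
    exact aux_mono F L I D (by simp only [Finset.mem_range] at hj; omega)
      (aux_lie F L I D j y hy x)
  exact h hm
end

section
/- Let L be a Lie algebra over an arbitrary field F, let I be an ideal of L, and let D be a derivation of L. Then for every natural number s and every natural number m with m ≤ 2ˢ − 1, one has Dᵐ(I⁽ˢ⁾) ⊆ I, where I⁽ˢ⁾ denotes the s-th term of the derived series of I. -/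
/-- Let `L` be a Lie algebra over an arbitrary field `F`, let `I` be an
ideal of `L`, and let `D` be a derivation of `L`. Then for every natural number `s` and
every `m ≤ 2ˢ - 1`, one has `Dᵐ(I⁽ˢ⁾) ⊆ I`, where `I⁽ˢ⁾` is the `s`-th term of the
derived series of `I`. -/
theorem statement1 (F L : Type*) [Field F] [LieRing L] [LieAlgebra F L]
    (I : LieIdeal F L) (D : LieDerivation F L L) (s m : ℕ) (hm : m ≤ 2 ^ s - 1) :
    Submodule.map (D.toLinearMap ^ m)
        (LieAlgebra.derivedSeriesOfIdeal F L s I).toSubmodule ≤ I.toSubmodule := by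
  induction s generalizing m with
  | zero =>
    obtain rfl : m = 0 := by simpa using hm
    rintro _ ⟨x, hx, rfl⟩
    simpa using hx
  | succ s ih =>
    have key : ∀ n, n ≤ 2 ^ s - 1 → ∀ x ∈ LieAlgebra.derivedSeriesOfIdeal F L s I,
        D^[n] x ∈ I := by
      intro n hn x hx
      have := ih n hn ⟨x, hx, rfl⟩
      rw [Module.End.pow_apply] at this
      exact this
    rw [LieAlgebra.derivedSeriesOfIdeal_succ, LieSubmodule.lieIdeal_oper_eq_linear_span',
      Submodule.map_le_iff_le_comap, Submodule.span_le]
    rintro _ ⟨a, ha, b, hb, rfl⟩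
    rw [SetLike.mem_coe, Submodule.mem_comap, Module.End.pow_apply]
    change D^[m] ⁅a, b⁆ ∈ I
    rw [LieDerivation.iterate_apply_lie]
    refine sum_mem fun ij hij => nsmul_mem ?_ _
    rw [Finset.HasAntidiagonal.mem_antidiagonal] at hij
    rw [pow_succ] at hm
    rcases le_or_gt ij.1 (2 ^ s - 1) with h | h
    · exact lie_mem_left F L I _ _ (key _ h a ha)
    · exact lie_mem_right F L I _ _ (key _ (by omega) b hb)
end

section
/- Let L be a Lie algebra over a field F, let I be an ideal of L, let D be a derivation of L, and let k ≥ 1. If the characteristic of F does not divide the binomial coefficient C(2ᵏ, 2ᵏ⁻¹), then [D^{2^{k-1}}(I⁽ᵏ⁻¹⁾), D^{2^{k-1}}(I⁽ᵏ⁻¹⁾)] ⊆ D^{2^k}(I⁽ᵏ⁾) + I, where the left-hand side is the span of all brackets of elements of D^{2^{k-1}}(I⁽ᵏ⁻¹⁾). -/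
theorem aux_iter (F L : Type*) [Field F] [LieRing L] [LieAlgebra F L]
    (I : LieIdeal F L) (D : LieDerivation F L L) (m : ℕ) :
    ∀ j < 2 ^ m, ∀ a ∈ LieAlgebra.derivedSeriesOfIdeal F L m I, D^[j] a ∈ I := by
  induction m with
  | zero =>
    intro j hj a ha
    have : j = 0 := by simpa using hj
    subst this
    simpa using ha
  | succ m ih =>
    intro j hj a ha
    rw [LieAlgebra.derivedSeriesOfIdeal_succ, ← LieSubmodule.mem_toSubmodule,
      LieSubmodule.lieIdeal_oper_eq_linear_span'] at ha
    have hle : Submodule.span F {x : L | ∃ a ∈ LieAlgebra.derivedSeriesOfIdeal F L m I,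
        ∃ b ∈ LieAlgebra.derivedSeriesOfIdeal F L m I, ⁅a, b⁆ = x} ≤
        I.toSubmodule.comap (D.toLinearMap ^ j) := by
      rw [Submodule.span_le]
      rintro _ ⟨a, ha, b, hb, rfl⟩
      simp only [SetLike.mem_coe, Submodule.mem_comap, Module.End.pow_apply]
      change D^[j] ⁅a, b⁆ ∈ I
      rw [LieDerivation.iterate_apply_lie]
      refine sum_mem fun ij hij => ?_
      rw [Finset.HasAntidiagonal.mem_antidiagonal] at hij
      refine nsmul_mem ?_ _
      rcases lt_or_ge ij.1 (2 ^ m) with h | h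
      · exact lie_mem_left F L I _ _ (ih _ h a ha)
      · exact lie_mem_right F L I _ _ (ih _ (by rw [pow_succ] at hj; omega) b hb)
    have := hle ha
    simp only [Submodule.mem_comap, Module.End.pow_apply] at this
    exact this

/-- Let `L` be a Lie algebra over a field `F`, `I` an ideal of `L`,
`D` a derivation of `L`, and `k ≥ 1`. If `char F` does not divide the binomial
coefficient `C(2ᵏ, 2ᵏ⁻¹)` (equivalently, `C(2ᵏ, 2ᵏ⁻¹) ≠ 0` in `F`), then
`[D^{2^{k-1}}(I⁽ᵏ⁻¹⁾), D^{2^{k-1}}(I⁽ᵏ⁻¹⁾)] ⊆ D^{2^k}(I⁽ᵏ⁾) + I`, where the left-hand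
side is the span of all brackets of elements of `D^{2^{k-1}}(I⁽ᵏ⁻¹⁾)`. -/
theorem statement2 (F L : Type*) [Field F] [LieRing L] [LieAlgebra F L]
    (I : LieIdeal F L) (D : LieDerivation F L L) (k : ℕ) (hk : 1 ≤ k)
    (hchar : (Nat.choose (2 ^ k) (2 ^ (k - 1)) : F) ≠ 0) :
    Submodule.span F
        {z : L | ∃ x ∈ Submodule.map (D.toLinearMap ^ 2 ^ (k - 1))
            (LieAlgebra.derivedSeriesOfIdeal F L (k - 1) I).toSubmodule,
          ∃ y ∈ Submodule.map (D.toLinearMap ^ 2 ^ (k - 1))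
            (LieAlgebra.derivedSeriesOfIdeal F L (k - 1) I).toSubmodule,
          z = ⁅x, y⁆} ≤
      Submodule.map (D.toLinearMap ^ 2 ^ k)
          (LieAlgebra.derivedSeriesOfIdeal F L k I).toSubmodule ⊔
        I.toSubmodule := by
  obtain ⟨m, rfl⟩ : ∃ m, k = m + 1 := ⟨k - 1, by omega⟩
  simp only [Nat.add_sub_cancel] at *
  rw [Submodule.span_le]
  rintro _ ⟨_, ⟨a, ha, rfl⟩, _, ⟨b, hb, rfl⟩, rfl⟩
  have ha' : a ∈ LieAlgebra.derivedSeriesOfIdeal F L m I := ha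
  have hb' : b ∈ LieAlgebra.derivedSeriesOfIdeal F L m I := hb
  simp only [SetLike.mem_coe, Module.End.pow_apply]
  change ⁅D^[2 ^ m] a, D^[2 ^ m] b⁆ ∈ _
  set S := Submodule.map (D.toLinearMap ^ 2 ^ (m + 1))
    (LieAlgebra.derivedSeriesOfIdeal F L (m + 1) I).toSubmodule ⊔ I.toSubmodule with hS
  have h1 : D^[2 ^ (m + 1)] ⁅a, b⁆ ∈ S := by
    refine Submodule.mem_sup_left ⟨⁅a, b⁆, ?_, ?_⟩
    · change ⁅a, b⁆ ∈ LieAlgebra.derivedSeriesOfIdeal F L (m + 1) I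
      rw [LieAlgebra.derivedSeriesOfIdeal_succ]
      exact LieSubmodule.lie_mem_lie ha' hb'
    · rw [Module.End.pow_apply]; rfl
  have hmem : ((2 ^ m, 2 ^ m) : ℕ × ℕ) ∈ Finset.HasAntidiagonal.antidiagonal (2 ^ (m + 1)) := by
    rw [Finset.HasAntidiagonal.mem_antidiagonal, pow_succ]; ring
  rw [LieDerivation.iterate_apply_lie, ← Finset.add_sum_erase _ _ hmem] at h1
  have h2 := (Submodule.add_mem_iff_left S (sum_mem fun ij hij => ?_)).1 h1
  · rw [← Nat.cast_smul_eq_nsmul F] at h2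
    exact (Submodule.smul_mem_iff S hchar).1 h2
  · rw [Finset.mem_erase, Finset.HasAntidiagonal.mem_antidiagonal] at hij
    obtain ⟨hne, hsum⟩ := hij
    refine nsmul_mem (Submodule.mem_sup_right ?_) _
    change _ ∈ I
    rcases lt_or_ge ij.1 (2 ^ m) with h | h
    · exact lie_mem_left F L I _ _ (aux_iter F L I D m _ h a ha')
    · refine lie_mem_right F L I _ _ (aux_iter F L I D m _ ?_ b hb')
      rw [pow_succ] at hsum
      by_contra hcon
      exact hne (Prod.ext (by simp only; omega) (by simp only; omega))
end

section
/- Let p be an odd prime and n a positive natural number. Then p does not divide any of the binomial coefficients C(2,1), C(4,2), …, C(2ⁿ, 2ⁿ⁻¹) if and only if n < log₂ p (equivalently, if and only if 2ⁿ < p). -/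
/-- Let `p` be an odd prime and `n` a positive natural number. Then `p`
does not divide any of the binomial coefficients `C(2,1), C(4,2), …, C(2ⁿ, 2ⁿ⁻¹)` if and
only if `n < log₂ p`, equivalently `2ⁿ < p`. -/
theorem statement3 (p n : ℕ) (hp : p.Prime) (hodd : Odd p) (hn : 0 < n) :
    (∀ k : ℕ, 1 ≤ k → k ≤ n → ¬ p ∣ Nat.choose (2 ^ k) (2 ^ (k - 1))) ↔ 2 ^ n < p := by
  constructor
  · intro h
    by_contra hlt
    have hle : p ≤ 2 ^ n := not_lt.mp hlt
    have hex : ∃ k, p ≤ 2 ^ k := ⟨n, hle⟩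
    classical
    obtain ⟨k, hk, hmin⟩ : ∃ k, p ≤ 2 ^ k ∧ ∀ m < k, ¬ p ≤ 2 ^ m :=
      ⟨Nat.find hex, Nat.find_spec hex, fun m hm => Nat.find_min hex hm⟩
    have hkn : k ≤ n := by
      by_contra hc
      exact hmin n (by omega) hle
    cases k with
    | zero =>
      have := hp.two_le
      simp at hk
      omega
    | succ j =>
      have hj : 2 ^ j < p := not_le.mp (hmin j (by omega))
      have e : 2 ^ (j + 1) = 2 ^ j + 2 ^ j := by ring
      apply h (j + 1) (by omega) hkn
      rw [Nat.add_sub_cancel, e]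
      exact hp.dvd_choose_add hj hj (e ▸ hk)
  · intro h k _ hkn hd
    have hle : 2 ^ (k - 1) ≤ 2 ^ k := Nat.pow_le_pow_right (by norm_num) (by omega)
    have h1 : p ∣ (2 ^ k).factorial := by
      rw [← Nat.choose_mul_factorial_mul_factorial hle, mul_assoc]
      exact Dvd.dvd.mul_right hd _
    have h2 : p ≤ 2 ^ k := (hp.dvd_factorial).mp h1
    have h3 : 2 ^ k ≤ 2 ^ n := Nat.pow_le_pow_right (by norm_num) hkn
    omega
end

section
/- Let L be a Lie algebra over a field F of characteristic 0, let I be a solvable ideal of L of derived length n, and let D be a derivation of L. Then the ideal I + D(I) is solvable of derived length at most 2n. -/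
theorem aux_step (F L : Type*) [Field F] [CharZero F] [LieRing L] [LieAlgebra F L]
    (I : LieIdeal F L) (D : LieDerivation F L L) (J : LieIdeal F L)
    (hJ : J.toSubmodule = I.toSubmodule ⊔ Submodule.map D.toLinearMap I.toSubmodule) (k : ℕ) :
    ∀ y ∈ LieAlgebra.derivedSeriesOfIdeal F L k J,
      ∃ x ∈ LieAlgebra.derivedSeriesOfIdeal F L k I,
        (∀ j < 2 ^ k, (D.toLinearMap ^ j) x ∈ I) ∧ (D.toLinearMap ^ (2 ^ k)) x - y ∈ I := by
  induction k with
  | zero =>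
    intro y hy
    rw [LieAlgebra.derivedSeriesOfIdeal_zero] at hy
    have hy' : y ∈ J.toSubmodule := hy
    rw [hJ, Submodule.mem_sup] at hy'
    obtain ⟨a, ha, c, ⟨b, hb, rfl⟩, rfl⟩ := hy'
    refine ⟨b, hb, ?_, ?_⟩
    · intro j hj
      obtain rfl : j = 0 := by simpa using hj
      simpa using hb
    · have : (D.toLinearMap ^ (2 ^ 0)) b - (a + D.toLinearMap b) = -a := by
        simp
      rw [this]
      exact I.toSubmodule.neg_mem ha
  | succ k ih =>
    intro y hy
    rw [LieAlgebra.derivedSeriesOfIdeal_succ] at hy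
    have hy' : y ∈ (⁅LieAlgebra.derivedSeriesOfIdeal F L k J,
      LieAlgebra.derivedSeriesOfIdeal F L k J⁆ : LieIdeal F L).toSubmodule := hy
    rw [LieSubmodule.lieIdeal_oper_eq_linear_span'] at hy'
    clear hy
    induction hy' using Submodule.span_induction with
    | zero => exact ⟨0, zero_mem _, by simp, by simp⟩
    | add u v _ _ hu hv =>
      obtain ⟨p, hp, hp1, hp2⟩ := hu
      obtain ⟨q, hq, hq1, hq2⟩ := hv
      refine ⟨p + q, add_mem hp hq, fun j hj => ?_, ?_⟩
      · rw [map_add]; exact add_mem (hp1 j hj) (hq1 j hj)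
      · rw [map_add, add_sub_add_comm]; exact add_mem hp2 hq2
    | smul c u _ hu =>
      obtain ⟨p, hp, hp1, hp2⟩ := hu
      refine ⟨c • p, Submodule.smul_mem _ c hp, fun j hj => ?_, ?_⟩
      · rw [map_smul]; exact Submodule.smul_mem I.toSubmodule c (hp1 j hj)
      · rw [map_smul, ← smul_sub]; exact Submodule.smul_mem I.toSubmodule c hp2
    | mem y hy =>
      obtain ⟨u, hu, v, hv, rfl⟩ := hy
      obtain ⟨p, hp, hp1, hp2⟩ := ih u hu
      obtain ⟨q, hq, hq1, hq2⟩ := ih v hv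
      have leib : ∀ j, (D.toLinearMap ^ j) ⁅p, q⁆ = ∑ ij ∈ Finset.HasAntidiagonal.antidiagonal j,
          j.choose ij.1 • ⁅(D.toLinearMap ^ ij.1) p, (D.toLinearMap ^ ij.2) q⁆ := by
        intro j
        simpa [Module.End.pow_apply] using D.iterate_apply_lie j p q
      have term : ∀ (a b c : ℕ), (a < 2 ^ k ∨ b < 2 ^ k) →
          c • ⁅(D.toLinearMap ^ a) p, (D.toLinearMap ^ b) q⁆ ∈ I := by
        intro a b c h
        refine nsmul_mem ?_ c
        rcases h with h | h
        · exact lie_mem_left F L I _ _ (hp1 a h)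
        · exact lie_mem_right F L I _ _ (hq1 b h)
      set C : ℕ := (2 ^ (k+1)).choose (2 ^ k) with hC
      have hC0 : (C : F) ≠ 0 := by
        rw [Nat.cast_ne_zero]
        exact (Nat.choose_pos (Nat.pow_le_pow_right (by norm_num) (by omega))).ne'
      have h2 : 2 ^ (k+1) = 2 ^ k + 2 ^ k := by ring
      refine ⟨(C : F)⁻¹ • ⁅p, q⁆, ?_, fun j hj => ?_, ?_⟩
      · refine Submodule.smul_mem _ _ ?_
        rw [LieAlgebra.derivedSeriesOfIdeal_succ]
        exact LieSubmodule.lie_mem_lie hp hq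
      · rw [map_smul]
        refine Submodule.smul_mem I.toSubmodule _ ?_
        rw [leib]
        refine Submodule.sum_mem I.toSubmodule fun ij hij => term _ _ _ ?_
        rw [Finset.HasAntidiagonal.mem_antidiagonal] at hij
        omega
      · rw [map_smul, leib]
        have hm : ((2 ^ k, 2 ^ k) : ℕ × ℕ) ∈ Finset.HasAntidiagonal.antidiagonal (2 ^ (k+1)) := by
          rw [Finset.HasAntidiagonal.mem_antidiagonal]; omega
        rw [← Finset.add_sum_erase _ _ hm, smul_add, add_sub_right_comm]
        refine add_mem ?_ (Submodule.smul_mem I.toSubmodule _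
          (Submodule.sum_mem I.toSubmodule fun ij hij => term _ _ _ ?_))
        · simp only [← hC]
          rw [← Nat.cast_smul_eq_nsmul F, smul_smul, inv_mul_cancel₀ hC0, one_smul]
          generalize (D.toLinearMap ^ 2 ^ k) p = p' at *
          generalize (D.toLinearMap ^ 2 ^ k) q = q' at *
          have : ⁅p', q'⁆ - ⁅u, v⁆ = ⁅p' - u, q'⁆ + ⁅u, q' - v⁆ := by
            simp
          rw [this]
          exact add_mem (lie_mem_left F L I _ _ hp2) (lie_mem_right F L I _ _ hq2)
        · rw [Finset.mem_erase, Finset.HasAntidiagonal.mem_antidiagonal] at hij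
          obtain ⟨hne, hs⟩ := hij
          by_contra hcon
          apply hne
          ext <;> simp <;> omega

/-- Let `L` be a Lie algebra over a field `F` of characteristic `0`, let
`I` be a solvable ideal of `L` of derived length `n`, and let `D` be a derivation of `L`.
Then the ideal `I + D(I)` is solvable of derived length at most `2n`. -/
theorem statement4 (F L : Type*) [Field F] [CharZero F] [LieRing L] [LieAlgebra F L]
    (I : LieIdeal F L) (n : ℕ)
    (hsolv : LieAlgebra.derivedSeriesOfIdeal F L n I = ⊥)
    (hmin : ∀ m < n, LieAlgebra.derivedSeriesOfIdeal F L m I ≠ ⊥)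
    (D : LieDerivation F L L)
    (J : LieIdeal F L)
    (hJ : J.toSubmodule = I.toSubmodule ⊔ Submodule.map D.toLinearMap I.toSubmodule) :
    LieAlgebra.derivedSeriesOfIdeal F L (2 * n) J = ⊥ := by
  have key : LieAlgebra.derivedSeriesOfIdeal F L n J ≤ I := by
    intro y hy
    obtain ⟨x, hx, -, h⟩ := aux_step F L I D J hJ n y hy
    rw [hsolv, LieSubmodule.mem_bot] at hx
    subst hx
    rw [map_zero, zero_sub] at h
    exact neg_mem_iff.mp h
  rw [two_mul, LieAlgebra.derivedSeriesOfIdeal_add, eq_bot_iff, ← hsolv]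
  exact LieAlgebra.derivedSeriesOfIdeal_mono key n
end

section
/- Let L be a Lie algebra over a field F of characteristic p > 0, let I be a solvable ideal of L of derived length n with n < log₂ p (equivalently 2ⁿ < p), and let D be a derivation of L. Then the ideal I + D(I) is solvable of derived length at most 2n. -/
theorem iter_low {F L : Type*} [Field F] [LieRing L] [LieAlgebra F L]
    (I : LieIdeal F L) (D : LieDerivation F L L) (k : ℕ) :
    ∀ i < 2 ^ k, ∀ a ∈ LieAlgebra.derivedSeriesOfIdeal F L k I,
      ((D : L →ₗ[F] L) ^ i) a ∈ I := by
  induction k with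
  | zero =>
    intro i hi a ha
    obtain rfl : i = 0 := by simpa using hi
    simpa using ha
  | succ k ih =>
    intro i hi a ha
    rw [LieAlgebra.derivedSeriesOfIdeal_succ, ← LieSubmodule.mem_toSubmodule,
      LieSubmodule.lieIdeal_oper_eq_linear_span'] at ha
    induction ha using Submodule.span_induction with
    | mem x hx =>
      obtain ⟨a, ha, b, hb, rfl⟩ := hx
      rw [Module.End.pow_apply]
      have := D.iterate_apply_lie i a b
      simp only [LieDerivation.coeFn_coe]
      rw [this]
      refine sum_mem fun ij hij => ?_
      rw [Finset.HasAntidiagonal.mem_antidiagonal] at hij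
      refine nsmul_mem ?_ _
      by_cases h : ij.1 < 2 ^ k
      · have := ih _ h a ha
        rw [Module.End.pow_apply] at this
        exact lie_mem_left F L I _ _ this
      · have := ih ij.2 (by rw [pow_succ] at hi; omega) b hb
        rw [Module.End.pow_apply] at this
        exact lie_mem_right F L I _ _ this
    | zero => simp
    | add x y _ _ hx hy => rw [map_add]; exact add_mem hx hy
    | smul c x _ hx => rw [map_smul]; exact I.smul_mem c hx

theorem iter_mid {F L : Type*} [Field F] [LieRing L] [LieAlgebra F L]
    (I : LieIdeal F L) (D : LieDerivation F L L) (k : ℕ) (a b : L)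
    (ha : a ∈ LieAlgebra.derivedSeriesOfIdeal F L k I)
    (hb : b ∈ LieAlgebra.derivedSeriesOfIdeal F L k I) :
    ((D : L →ₗ[F] L) ^ (2 ^ (k + 1))) ⁅a, b⁆ -
      (Nat.choose (2 ^ (k + 1)) (2 ^ k)) • ⁅((D : L →ₗ[F] L) ^ (2 ^ k)) a,
        ((D : L →ₗ[F] L) ^ (2 ^ k)) b⁆ ∈ I := by
  have h1 := D.iterate_apply_lie (2 ^ (k + 1)) a b
  simp only [Module.End.pow_apply, LieDerivation.coeFn_coe]
  rw [h1, ← Finset.sum_erase_add _ _ (a := (2 ^ k, 2 ^ k))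
    (by rw [Finset.HasAntidiagonal.mem_antidiagonal, pow_succ]; dsimp only; omega), add_sub_cancel_right]
  refine sum_mem fun ij hij => ?_
  rw [Finset.mem_erase, Finset.HasAntidiagonal.mem_antidiagonal, pow_succ] at hij
  refine nsmul_mem ?_ _
  by_cases h : ij.1 < 2 ^ k
  · have := iter_low I D k _ h a ha
    rw [Module.End.pow_apply] at this
    exact lie_mem_left F L I _ _ this
  · have h2 : ij.2 < 2 ^ k := by
      by_contra h3
      exact hij.1 (Prod.ext (by dsimp only; omega) (by dsimp only; omega))
    have := iter_low I D k _ h2 b hb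
    rw [Module.End.pow_apply] at this
    exact lie_mem_right F L I _ _ this

theorem derived_le {F L : Type*} [Field F] [LieRing L] [LieAlgebra F L]
    (p : ℕ) [CharP F p] (hp : p.Prime) (I J : LieIdeal F L) (D : LieDerivation F L L)
    (hJ : J.toSubmodule = I.toSubmodule ⊔ Submodule.map D.toLinearMap I.toSubmodule) (k : ℕ)
    (hk : 2 ^ k < p) :
    ∀ u ∈ LieAlgebra.derivedSeriesOfIdeal F L k J,
      ∃ a ∈ LieAlgebra.derivedSeriesOfIdeal F L k I,
        u - ((D : L →ₗ[F] L) ^ (2 ^ k)) a ∈ I := by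
  induction k with
  | zero =>
    intro u hu
    have hu : u ∈ J.toSubmodule := hu
    rw [hJ, Submodule.mem_sup] at hu
    obtain ⟨y, hy, z, ⟨a, ha, rfl⟩, rfl⟩ := hu
    refine ⟨a, ha, ?_⟩
    simpa using hy
  | succ k ih =>
    intro u hu
    have ih := ih (lt_trans (Nat.pow_lt_pow_right (by norm_num) (Nat.lt_succ_self k)) hk)
    rw [LieAlgebra.derivedSeriesOfIdeal_succ, ← LieSubmodule.mem_toSubmodule,
      LieSubmodule.lieIdeal_oper_eq_linear_span'] at hu
    induction hu using Submodule.span_induction with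
    | mem x hx =>
      obtain ⟨x, hx, y, hy, rfl⟩ := hx
      obtain ⟨a, ha, hxa⟩ := ih x hx
      obtain ⟨b, hb, hyb⟩ := ih y hy
      have hc : ((Nat.choose (2 ^ (k + 1)) (2 ^ k) : ℕ) : F) ≠ 0 := by
        rw [Ne, CharP.cast_eq_zero_iff F p]
        intro h
        have h1 : p ∣ (2 ^ (k + 1)).factorial := by
          rw [← Nat.choose_mul_factorial_mul_factorial
            (Nat.pow_le_pow_right (by norm_num) (Nat.le_succ k) : 2 ^ k ≤ 2 ^ (k + 1)), mul_assoc]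
          exact h.mul_right _
        exact absurd ((hp.dvd_factorial).1 h1) (by omega)
      set c : F := ((Nat.choose (2 ^ (k + 1)) (2 ^ k) : ℕ) : F) with hcdef
      refine ⟨c⁻¹ • ⁅a, b⁆, ?_, ?_⟩
      · rw [LieAlgebra.derivedSeriesOfIdeal_succ]
        exact Submodule.smul_mem (LieSubmodule.toSubmodule _) _ (LieSubmodule.lie_mem_lie ha hb)
      · have h := iter_mid I D k a b ha hb
        rw [← Nat.cast_smul_eq_nsmul F, ← hcdef] at h
        have h2 := I.smul_mem c⁻¹ h
        rw [smul_sub, inv_smul_smul₀ hc] at h2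
        set aa := ((D : L →ₗ[F] L) ^ (2 ^ k)) a
        set bb := ((D : L →ₗ[F] L) ^ (2 ^ k)) b
        have h3 : ⁅x - aa, y⁆ ∈ I := lie_mem_left F L I _ _ hxa
        have h4 : ⁅aa, y - bb⁆ ∈ I := lie_mem_right F L I _ _ hyb
        have h5 := sub_mem (add_mem h3 h4) h2
        rw [map_smul]
        convert h5 using 1
        rw [sub_lie, lie_sub]
        abel
    | zero => exact ⟨0, zero_mem _, by simp⟩
    | add x y _ _ hx hy =>
      obtain ⟨a, ha, hxa⟩ := hx
      obtain ⟨b, hb, hyb⟩ := hy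
      refine ⟨a + b, add_mem ha hb, ?_⟩
      rw [map_add, add_sub_add_comm]
      exact add_mem hxa hyb
    | smul c x _ hx =>
      obtain ⟨a, ha, hxa⟩ := hx
      refine ⟨c • a, Submodule.smul_mem (LieSubmodule.toSubmodule _) _ ha, ?_⟩
      rw [map_smul, ← smul_sub]
      exact I.smul_mem c hxa

/-- Let `L` be a Lie algebra over a field `F` of characteristic `p > 0`,
let `I` be a solvable ideal of `L` of derived length `n` with `n < log₂ p` (equivalently
`2ⁿ < p`), and let `D` be a derivation of `L`. Then the ideal `I + D(I)` is solvable of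
derived length at most `2n`. -/
theorem statement5 (F L : Type*) [Field F] [LieRing L] [LieAlgebra F L]
    (p : ℕ) [CharP F p] (hp : 0 < p)
    (I : LieIdeal F L) (n : ℕ)
    (hsolv : LieAlgebra.derivedSeriesOfIdeal F L n I = ⊥)
    (hmin : ∀ m < n, LieAlgebra.derivedSeriesOfIdeal F L m I ≠ ⊥)
    (hnp : 2 ^ n < p)
    (D : LieDerivation F L L)
    (J : LieIdeal F L)
    (hJ : J.toSubmodule = I.toSubmodule ⊔ Submodule.map D.toLinearMap I.toSubmodule) :
    LieAlgebra.derivedSeriesOfIdeal F L (2 * n) J = ⊥ := by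
  have hpp : p.Prime := (CharP.char_is_prime_or_zero F p).resolve_right (Nat.pos_iff_ne_zero.mp hp)
  have h : LieAlgebra.derivedSeriesOfIdeal F L n J ≤ I := by
    intro u hu
    obtain ⟨a, ha, h⟩ := derived_le p hpp I J D hJ n hnp u hu
    rw [hsolv, LieSubmodule.mem_bot] at ha
    subst ha
    simpa using h
  rw [two_mul, LieAlgebra.derivedSeriesOfIdeal_add, eq_bot_iff, ← hsolv]
  exact LieAlgebra.derivedSeriesOfIdeal_mono h n
end

section
/- Let L be a Lie algebra over a field F of characteristic 0 or characteristic p > 2, let I be a solvable ideal of L of derived length n, and let D be a derivation of L; write J = I + D(I). Then for every k with 1 ≤ k ≤ n such that char F does not divide any of the binomial coefficients C(2,1), C(4,2), …, C(2ᵏ, 2ᵏ⁻¹), one has J⁽ᵏ⁾ ⊆ D^{2^k}(I⁽ᵏ⁾) + I. -/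
/-- Leibniz sum with the linear map power. -/
theorem aux_leibniz {F L : Type*} [Field F] [LieRing L] [LieAlgebra F L]
    (D : LieDerivation F L L) (n : ℕ) (a b : L) :
    (D.toLinearMap ^ n) ⁅a, b⁆ = ∑ ij ∈ Finset.HasAntidiagonal.antidiagonal n,
      n.choose ij.1 • ⁅(D.toLinearMap ^ ij.1) a, (D.toLinearMap ^ ij.2) b⁆ := by
  have h := LieDerivation.iterate_apply_lie D n a b
  simp only [Module.End.pow_apply]
  exact h

/-- Low powers of `D` map the derived ideal into `I`. -/
theorem aux_low {F L : Type*} [Field F] [LieRing L] [LieAlgebra F L]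
    (I : LieIdeal F L) (D : LieDerivation F L L) (k : ℕ) :
    ∀ i < 2 ^ k, ∀ a ∈ LieAlgebra.derivedSeriesOfIdeal F L k I, (D.toLinearMap ^ i) a ∈ I := by
  induction k with
  | zero =>
    intro i hi a ha
    obtain rfl : i = 0 := by simpa using hi
    simpa using ha
  | succ k ih =>
    intro i hi a ha
    rw [LieAlgebra.derivedSeriesOfIdeal_succ, ← LieSubmodule.mem_toSubmodule,
      LieSubmodule.lieIdeal_oper_eq_linear_span'] at ha
    induction ha using Submodule.span_induction with
    | mem x hx =>
      obtain ⟨x, hx, y, hy, rfl⟩ := hx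
      rw [aux_leibniz]
      refine sum_mem fun ij hij => nsmul_mem ?_ _
      have hs := Finset.HasAntidiagonal.mem_antidiagonal.1 hij
      rw [pow_succ] at hi
      by_cases h : ij.1 < 2 ^ k
      · exact lie_mem_left F L I _ _ (ih _ h _ hx)
      · exact lie_mem_right F L I _ _ (ih _ (by omega) _ hy)
    | zero => simp
    | add x y _ _ hx hy => rw [map_add]; exact add_mem hx hy
    | smul c x _ hx => rw [map_smul]; exact I.smul_mem c hx

/-- The induction, also valid for `k = 0`. -/
theorem aux_main {F L : Type*} [Field F] [LieRing L] [LieAlgebra F L]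
    (I : LieIdeal F L) (D : LieDerivation F L L) (J : LieIdeal F L)
    (hJ : J.toSubmodule = I.toSubmodule ⊔ Submodule.map D.toLinearMap I.toSubmodule)
    (k : ℕ)
    (hbinom : ∀ j : ℕ, 1 ≤ j → j ≤ k → (Nat.choose (2 ^ j) (2 ^ (j - 1)) : F) ≠ 0) :
    (LieAlgebra.derivedSeriesOfIdeal F L k J).toSubmodule ≤
      Submodule.map (D.toLinearMap ^ 2 ^ k)
          (LieAlgebra.derivedSeriesOfIdeal F L k I).toSubmodule ⊔
        I.toSubmodule := by
  induction k with
  | zero =>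
    simp only [LieAlgebra.derivedSeriesOfIdeal_zero, pow_zero, pow_one, hJ]
    rw [sup_comm]
  | succ k ih =>
    have ih := ih fun j h1 h2 => hbinom j h1 (by omega)
    have hc := hbinom (k + 1) (by omega) le_rfl
    rw [LieAlgebra.derivedSeriesOfIdeal_succ, LieSubmodule.lieIdeal_oper_eq_linear_span',
      Submodule.span_le]
    rintro _ ⟨x, hx, y, hy, rfl⟩
    obtain ⟨_, ⟨a, ha, rfl⟩, u, hu, rfl⟩ := Submodule.mem_sup.1 (ih hx)
    obtain ⟨_, ⟨b, hb, rfl⟩, v, hv, rfl⟩ := Submodule.mem_sup.1 (ih hy)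
    simp only [SetLike.mem_coe, LieSubmodule.mem_toSubmodule] at ha hb hu hv
    have hab : ⁅a, b⁆ ∈ LieAlgebra.derivedSeriesOfIdeal F L (k + 1) I := by
      rw [LieAlgebra.derivedSeriesOfIdeal_succ]
      exact LieSubmodule.lie_mem_lie ha hb
    have hL := aux_leibniz D (2 ^ (k + 1)) a b
    have hmem : ((2 ^ k, 2 ^ k) : ℕ × ℕ) ∈ Finset.HasAntidiagonal.antidiagonal (2 ^ (k + 1)) := by
      rw [Finset.HasAntidiagonal.mem_antidiagonal, pow_succ]; omega
    rw [← Finset.add_sum_erase _ _ hmem] at hL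
    have hr : ∑ ij ∈ (Finset.HasAntidiagonal.antidiagonal (2 ^ (k + 1))).erase (2 ^ k, 2 ^ k),
        (2 ^ (k + 1)).choose ij.1 • ⁅(D.toLinearMap ^ ij.1) a, (D.toLinearMap ^ ij.2) b⁆ ∈ I := by
      refine sum_mem fun ij hij => nsmul_mem ?_ _
      obtain ⟨hne, hs⟩ := Finset.mem_erase.1 hij
      rw [Finset.HasAntidiagonal.mem_antidiagonal, pow_succ] at hs
      by_cases h : ij.1 < 2 ^ k
      · exact lie_mem_left F L I _ _ (aux_low I D k _ h _ ha)
      · have h2 : ij.2 < 2 ^ k := by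
          by_contra h3
          exact hne (Prod.ext (by simp only; omega) (by simp only; omega))
        exact lie_mem_right F L I _ _ (aux_low I D k _ h2 _ hb)
    generalize (∑ ij ∈ (Finset.HasAntidiagonal.antidiagonal (2 ^ (k + 1))).erase (2 ^ k, 2 ^ k),
        (2 ^ (k + 1)).choose ij.1 • ⁅(D.toLinearMap ^ ij.1) a, (D.toLinearMap ^ ij.2) b⁆) = r
      at hL hr
    simp only [Nat.add_sub_cancel] at hc
    rw [← Nat.cast_smul_eq_nsmul F] at hL
    generalize ((Nat.choose (2 ^ (k + 1)) (2 ^ k) : ℕ) : F) = c at hL hc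
    set A := (D.toLinearMap ^ 2 ^ k) a
    set B := (D.toLinearMap ^ 2 ^ k) b
    have key : ⁅A, B⁆ = (D.toLinearMap ^ 2 ^ (k + 1)) (c⁻¹ • ⁅a, b⁆) + (-(c⁻¹ • r)) := by
      rw [map_smul, hL, smul_add, smul_smul, inv_mul_cancel₀ hc, one_smul]
      abel
    have e : ⁅A + u, B + v⁆ = (D.toLinearMap ^ 2 ^ (k + 1)) (c⁻¹ • ⁅a, b⁆) +
        (-(c⁻¹ • r) + (⁅A, v⁆ + ⁅u, B + v⁆)) := by
      rw [add_lie, lie_add A, key]; abel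
    rw [e]
    refine Submodule.add_mem_sup ⟨_, ?_, rfl⟩ ?_
    · exact Submodule.smul_mem _ _ hab
    · exact add_mem (neg_mem (I.smul_mem _ hr))
        (add_mem (lie_mem_right F L I _ _ hv) (lie_mem_left F L I _ _ hu))

/-- Let `L` be a Lie algebra over a field `F` of characteristic `0` or
characteristic `p > 2` (i.e. `ringChar F ≠ 2`), let `I` be a solvable ideal of `L` of
derived length `n`, and let `D` be a derivation of `L`; write `J = I + D(I)`. Then for
every `k` with `1 ≤ k ≤ n` such that `char F` does not divide any of the binomial
coefficients `C(2,1), C(4,2), …, C(2ᵏ, 2ᵏ⁻¹)` (equivalently, these are nonzero in `F`),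
one has `J⁽ᵏ⁾ ⊆ D^{2^k}(I⁽ᵏ⁾) + I`. -/
theorem statement6 (F L : Type*) [Field F] [LieRing L] [LieAlgebra F L]
    (hcharF : ringChar F ≠ 2)
    (I : LieIdeal F L) (n : ℕ)
    (hsolv : LieAlgebra.derivedSeriesOfIdeal F L n I = ⊥)
    (hmin : ∀ m < n, LieAlgebra.derivedSeriesOfIdeal F L m I ≠ ⊥)
    (D : LieDerivation F L L)
    (J : LieIdeal F L)
    (hJ : J.toSubmodule = I.toSubmodule ⊔ Submodule.map D.toLinearMap I.toSubmodule)
    (k : ℕ) (hk1 : 1 ≤ k) (hkn : k ≤ n)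
    (hbinom : ∀ j : ℕ, 1 ≤ j → j ≤ k → (Nat.choose (2 ^ j) (2 ^ (j - 1)) : F) ≠ 0) :
    (LieAlgebra.derivedSeriesOfIdeal F L k J).toSubmodule ≤
      Submodule.map (D.toLinearMap ^ 2 ^ k)
          (LieAlgebra.derivedSeriesOfIdeal F L k I).toSubmodule ⊔
        I.toSubmodule := by
  exact aux_main I D J hJ k hbinom
end

section
/- Let L be a Lie algebra over a field F whose characteristic is not 2, let I be an ideal of L, and let D be a derivation of L; write J = I + D(I). Then the derived ideal J⁽¹⁾ = [J, J] is contained in D²(I⁽¹⁾) + I, where I⁽¹⁾ = [I, I]. -/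
/-- Let `L` be a Lie algebra over a field `F` with `char F ≠ 2`, let `I`
be an ideal of `L`, and let `D` be a derivation of `L`; write `J = I + D(I)`. Then the
derived ideal `J⁽¹⁾ = [J, J]` is contained in `D²(I⁽¹⁾) + I`, where `I⁽¹⁾ = [I, I]`. -/
theorem statement7 (F L : Type*) [Field F] [LieRing L] [LieAlgebra F L]
    (hcharF : ringChar F ≠ 2)
    (I : LieIdeal F L) (D : LieDerivation F L L)
    (J : LieIdeal F L)
    (hJ : J.toSubmodule = I.toSubmodule ⊔ Submodule.map D.toLinearMap I.toSubmodule) :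
    (⁅J, J⁆ : LieIdeal F L).toSubmodule ≤
      Submodule.map (D.toLinearMap ^ 2) (⁅I, I⁆ : LieIdeal F L).toSubmodule ⊔
        I.toSubmodule := by
  have h2 : (2 : F) ≠ 0 := Ring.two_ne_zero hcharF
  rw [LieSubmodule.lieIdeal_oper_eq_linear_span', Submodule.span_le]
  rintro _ ⟨x, hx, y, hy, rfl⟩
  have hx' : x ∈ J.toSubmodule := hx
  have hy' : y ∈ J.toSubmodule := hy
  rw [hJ, Submodule.mem_sup] at hx' hy'
  obtain ⟨a, ha, _, ⟨c, hc, rfl⟩, rfl⟩ := hx'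
  obtain ⟨b, hb, _, ⟨e, he, rfl⟩, rfl⟩ := hy'
  have hl : ∀ u v : L, v ∈ I → ⁅u, v⁆ ∈ I := fun u v hv => lie_mem_right F L I u v hv
  have hr : ∀ u v : L, u ∈ I → ⁅u, v⁆ ∈ I := fun u v hu => lie_mem_left F L I u v hu
  have key : D (D ⁅c, e⁆) = ⁅c, D (D e)⁆ + ⁅D (D c), e⁆ + (2 : F) • ⁅D c, D e⁆ := by
    simp only [LieDerivation.apply_lie_eq_add, map_add, two_smul]
    abel
  have hz : ⁅a, b + D e⁆ + ⁅D c, b⁆ - (2 : F)⁻¹ • (⁅c, D (D e)⁆ + ⁅D (D c), e⁆) ∈ I :=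
    sub_mem (add_mem (hr _ _ ha) (hl _ _ hb))
      (I.smul_mem _ (add_mem (hr _ _ hc) (hl _ _ he)))
  refine Submodule.mem_sup.2 ⟨(2 : F)⁻¹ • D (D ⁅c, e⁆), ?_, _, hz, ?_⟩
  · exact Submodule.smul_mem _ _ ⟨⁅c, e⁆, LieSubmodule.lie_mem_lie hc he, by simp [pow_two]⟩
  · change _ = ⁅a + D c, b + D e⁆
    rw [key, smul_add _ _ ((2 : F) • _), smul_smul, inv_mul_cancel₀ h2, one_smul]
    simp only [add_lie, lie_add]
    abel
end

section
/- Let L be a Lie algebra over a field F of characteristic p > 0, and let S(L) denote the sum of all solvable ideals of L. If S(L) is solvable of derived length n with n < log₂ p (equivalently 2ⁿ < p), then S(L) is a characteristic ideal of L, i.e. D(S(L)) ⊆ S(L) for every derivation D of L. -/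
/-- The ideal `S + D(S)`. -/
def idealSupDer {F L : Type*} [Field F] [LieRing L] [LieAlgebra F L]
    (S : LieIdeal F L) (D : LieDerivation F L L) : LieIdeal F L :=
  { S.toSubmodule ⊔ Submodule.map D.toLinearMap S.toSubmodule with
    lie_mem := by
      intro x m hm
      change m ∈ S.toSubmodule ⊔ Submodule.map D.toLinearMap S.toSubmodule at hm
      change ⁅x, m⁆ ∈ S.toSubmodule ⊔ Submodule.map D.toLinearMap S.toSubmodule
      obtain ⟨s, hs, t, ⟨u, hu, rfl⟩, rfl⟩ := Submodule.mem_sup.1 hm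
      refine Submodule.mem_sup.2 ⟨⁅x, s⁆ - ⁅D x, u⁆, ?_, D ⁅x, u⁆, ⟨⁅x, u⁆, ?_, rfl⟩, ?_⟩
      · exact S.toSubmodule.sub_mem (S.lie_mem hs) (S.lie_mem hu)
      · exact S.lie_mem hu
      · have h : D ⁅x, u⁆ = ⁅x, D u⁆ + ⁅D x, u⁆ := by
          rw [LieDerivation.apply_lie_eq_add]
        rw [h, lie_add]
        change _ = ⁅x, s⁆ + ⁅x, D u⁆
        abel }

theorem iter_mem {F L : Type*} [Field F] [LieRing L] [LieAlgebra F L]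
    (S : LieIdeal F L) (D : LieDerivation F L L) (k : ℕ) :
    ∀ a ∈ LieAlgebra.derivedSeriesOfIdeal F L k S, ∀ j < 2 ^ k, D^[j] a ∈ S := by
  induction k with
  | zero =>
    intro a ha j hj
    obtain rfl : j = 0 := by simpa using hj
    simpa using ha
  | succ k ih =>
    intro a ha j hj
    rw [LieAlgebra.derivedSeriesOfIdeal_succ, ← LieSubmodule.mem_toSubmodule,
      LieSubmodule.lieIdeal_oper_eq_linear_span'] at ha
    induction ha using Submodule.span_induction with
    | mem x hx =>
      obtain ⟨a, ha, b, hb, rfl⟩ := hx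
      rw [LieDerivation.iterate_apply_lie]
      refine sum_mem fun ij hij => ?_
      rw [Finset.HasAntidiagonal.mem_antidiagonal] at hij
      refine nsmul_mem ?_ _
      by_cases h : ij.1 < 2 ^ k
      · exact lie_mem_left F L S _ _ (ih a ha _ h)
      · exact lie_mem_right F L S _ _ (ih b hb _ (by rw [pow_succ] at hj; omega))
    | zero => rw [iterate_map_zero]; exact S.zero_mem
    | add x y _ _ hx hy => rw [iterate_map_add]; exact S.add_mem hx hy
    | smul c x _ hx =>
      have : D^[j] (c • x) = c • D^[j] x := by
        have := (D.toLinearMap ^ j).map_smul c x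
        rw [Module.End.pow_apply, Module.End.pow_apply] at this; exact this
      rw [this]; exact S.smul_mem c hx

theorem exists_iter {F L : Type*} [Field F] [LieRing L] [LieAlgebra F L]
    (p : ℕ) [CharP F p] (hp : p.Prime)
    (S : LieIdeal F L) (D : LieDerivation F L L) (k : ℕ) (hk : 2 ^ k < p) :
    ∀ m ∈ LieAlgebra.derivedSeriesOfIdeal F L k (idealSupDer S D),
      ∃ a ∈ LieAlgebra.derivedSeriesOfIdeal F L k S, D^[2 ^ k] a - m ∈ S := by
  induction k with
  | zero =>
    intro m hm
    change m ∈ S.toSubmodule ⊔ Submodule.map D.toLinearMap S.toSubmodule at hm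
    obtain ⟨s, hs, t, ⟨u, hu, rfl⟩, rfl⟩ := Submodule.mem_sup.1 hm
    refine ⟨u, hu, ?_⟩
    have : D^[2 ^ 0] u - (s + D.toLinearMap u) = -s := by
      change D u - (s + D u) = -s
      abel
    rw [this]
    exact S.neg_mem hs
  | succ k ih =>
    have hk' : 2 ^ k < p := lt_of_le_of_lt (Nat.pow_le_pow_right (by norm_num) (Nat.le_succ k)) hk
    have ih := ih hk'
    have hsm : ∀ (j : ℕ) (c : F) (x : L), D^[j] (c • x) = c • D^[j] x := by
      intro j c x
      have := (D.toLinearMap ^ j).map_smul c x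
      rw [Module.End.pow_apply, Module.End.pow_apply] at this; exact this
    intro m hm
    rw [LieAlgebra.derivedSeriesOfIdeal_succ, ← LieSubmodule.mem_toSubmodule,
      LieSubmodule.lieIdeal_oper_eq_linear_span'] at hm
    induction hm using Submodule.span_induction with
    | mem x hx =>
      obtain ⟨m₁, hm₁, m₂, hm₂, rfl⟩ := hx
      obtain ⟨a, ha, ham⟩ := ih m₁ hm₁
      obtain ⟨b, hb, hbm⟩ := ih m₂ hm₂
      have hc : (((2 ^ (k + 1)).choose (2 ^ k) : ℕ) : F) ≠ 0 := by
        rw [Ne, CharP.cast_eq_zero_iff F p]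
        intro h
        have hle : 2 ^ k ≤ 2 ^ (k + 1) := Nat.pow_le_pow_right (by norm_num) (Nat.le_succ k)
        have h2 : p ∣ (2 ^ (k + 1)).factorial := by
          rw [← Nat.choose_mul_factorial_mul_factorial hle, mul_assoc]
          exact h.mul_right _
        exact absurd ((hp.dvd_factorial).1 h2) (by omega)
      set c : ℕ := (2 ^ (k + 1)).choose (2 ^ k) with hcdef
      have hab : ⁅a, b⁆ ∈ LieAlgebra.derivedSeriesOfIdeal F L (k + 1) S := by
        rw [LieAlgebra.derivedSeriesOfIdeal_succ]
        exact LieSubmodule.lie_mem_lie ha hb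
      refine ⟨(c : F)⁻¹ • ⁅a, b⁆, SMulMemClass.smul_mem _ hab, ?_⟩
      have key : D^[2 ^ (k + 1)] ⁅a, b⁆ - c • ⁅D^[2 ^ k] a, D^[2 ^ k] b⁆ ∈ S := by
        rw [LieDerivation.iterate_apply_lie]
        have hmem : ((2 ^ k, 2 ^ k) : ℕ × ℕ) ∈ Finset.HasAntidiagonal.antidiagonal (2 ^ (k + 1)) := by
          rw [Finset.HasAntidiagonal.mem_antidiagonal, pow_succ]; ring
        rw [← Finset.add_sum_erase _ _ hmem, add_sub_cancel_left]
        refine sum_mem fun ij hij => ?_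
        rw [Finset.mem_erase, Finset.HasAntidiagonal.mem_antidiagonal, pow_succ] at hij
        refine nsmul_mem ?_ _
        by_cases h : ij.1 < 2 ^ k
        · exact lie_mem_left F L S _ _ (iter_mem S D k a ha _ h)
        · refine lie_mem_right F L S _ _ (iter_mem S D k b hb _ ?_)
          by_contra h'
          exact hij.1 (Prod.ext (by simp only; omega) (by simp only; omega))
      have key2 : ⁅D^[2 ^ k] a, D^[2 ^ k] b⁆ - ⁅m₁, m₂⁆ ∈ S := by
        have : ⁅D^[2 ^ k] a, D^[2 ^ k] b⁆ - ⁅m₁, m₂⁆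
            = ⁅D^[2 ^ k] a - m₁, D^[2 ^ k] b⁆ + ⁅m₁, D^[2 ^ k] b - m₂⁆ := by
          rw [sub_lie, lie_sub]; abel
        rw [this]
        exact S.add_mem (lie_mem_left F L S _ _ ham) (lie_mem_right F L S _ _ hbm)
      have e : D^[2 ^ (k + 1)] ((c : F)⁻¹ • ⁅a, b⁆) - ⁅m₁, m₂⁆
          = (c : F)⁻¹ • (D^[2 ^ (k + 1)] ⁅a, b⁆ - c • ⁅D^[2 ^ k] a, D^[2 ^ k] b⁆)
            + (⁅D^[2 ^ k] a, D^[2 ^ k] b⁆ - ⁅m₁, m₂⁆) := by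
        rw [hsm, smul_sub, ← Nat.cast_smul_eq_nsmul F c, inv_smul_smul₀ hc]; abel
      rw [e]
      exact S.add_mem (S.smul_mem _ key) key2
    | zero => exact ⟨0, LieSubmodule.zero_mem _, by rw [iterate_map_zero, sub_zero]; exact S.zero_mem⟩
    | add x y _ _ hx hy =>
      obtain ⟨a, ha, h1⟩ := hx
      obtain ⟨b, hb, h2⟩ := hy
      refine ⟨a + b, add_mem ha hb, ?_⟩
      rw [iterate_map_add, add_sub_add_comm]
      exact S.add_mem h1 h2
    | smul c x _ hx =>
      obtain ⟨a, ha, h1⟩ := hx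
      refine ⟨c • a, SMulMemClass.smul_mem c ha, ?_⟩
      rw [hsm, ← smul_sub]
      exact S.smul_mem c h1


/-- Let `L` be a Lie algebra over a field `F` of characteristic `p > 0`,
and let `S(L)` denote the sum of all solvable ideals of `L`. If `S(L)` is solvable of
derived length `n` with `n < log₂ p` (equivalently `2ⁿ < p`), then `S(L)` is a
characteristic ideal: `D(S(L)) ⊆ S(L)` for every derivation `D` of `L`. -/
theorem statement9 (F L : Type*) [Field F] [LieRing L] [LieAlgebra F L]
    (p : ℕ) [CharP F p] (hp : 0 < p)
    (S : LieIdeal F L)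
    (hS : S = sSup {I : LieIdeal F L | ∃ k : ℕ, LieAlgebra.derivedSeriesOfIdeal F L k I = ⊥})
    (n : ℕ)
    (hsolv : LieAlgebra.derivedSeriesOfIdeal F L n S = ⊥)
    (hmin : ∀ m < n, LieAlgebra.derivedSeriesOfIdeal F L m S ≠ ⊥)
    (hnp : 2 ^ n < p)
    (D : LieDerivation F L L) :
    Submodule.map D.toLinearMap S.toSubmodule ≤ S.toSubmodule := by
  have hpp : p.Prime := (CharP.char_is_prime_or_zero F p).resolve_right hp.ne'
  have h1 : LieAlgebra.derivedSeriesOfIdeal F L n (idealSupDer S D) ≤ S := by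
    intro m hm
    obtain ⟨a, ha, h⟩ := exists_iter p hpp S D n hnp m hm
    rw [hsolv, LieSubmodule.mem_bot] at ha
    subst ha
    rw [iterate_map_zero, zero_sub] at h
    simpa using S.neg_mem h
  have h2 : LieAlgebra.derivedSeriesOfIdeal F L (n + n) (idealSupDer S D) = ⊥ := by
    rw [LieAlgebra.derivedSeriesOfIdeal_add, eq_bot_iff, ← hsolv]
    exact LieAlgebra.derivedSeriesOfIdeal_mono h1 n
  have h3 : idealSupDer S D ≤ S := by
    conv_rhs => rw [hS]
    exact le_sSup ⟨n + n, h2⟩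
  intro x hx
  apply h3
  change x ∈ S.toSubmodule ⊔ Submodule.map D.toLinearMap S.toSubmodule
  exact Submodule.mem_sup_right hx
end

section
/- Let L be a Lie algebra over a field F of characteristic 0, let I be an abelian ideal of L, and let D be a derivation of L. Then for every positive integer k, the ideal J_k = I + D(I) + ⋯ + Dᵏ(I) is solvable of derived length at most k + 1. -/
section Helpers
variable {F L : Type*} [Field F] [LieRing L] [LieAlgebra F L]

def auxS (I : LieIdeal F L) (D : LieDerivation F L L) (k : ℕ) : Submodule F L :=
  ⨆ j ∈ Finset.range (k + 1), Submodule.map (D.toLinearMap ^ j) I.toSubmodule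

lemma aux_pow (D : LieDerivation F L L) (j : ℕ) (a : L) :
    (D.toLinearMap ^ j) a = D^[j] a := by
  rw [Module.End.pow_apply]; rfl

lemma auxS_le {I : LieIdeal F L} {D : LieDerivation F L L} {k : ℕ} {P : Submodule F L}
    (h : ∀ j ≤ k, ∀ a ∈ I, D^[j] a ∈ P) : auxS I D k ≤ P := by
  refine iSup₂_le fun j hj => ?_
  rintro _ ⟨a, ha, rfl⟩
  rw [aux_pow]
  exact h j (by simpa [Nat.lt_succ_iff] using hj) a ha

lemma mem_auxS (I : LieIdeal F L) (D : LieDerivation F L L) {j k : ℕ} (hj : j ≤ k)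
    {a : L} (ha : a ∈ I) : D^[j] a ∈ auxS I D k := by
  rw [← aux_pow]
  have h := le_iSup₂_of_le (f := fun j (_ : j ∈ Finset.range (k + 1)) =>
    Submodule.map (D.toLinearMap ^ j) I.toSubmodule) j (by simp; omega) le_rfl
  exact h ⟨a, ha, rfl⟩

lemma auxS_mono (I : LieIdeal F L) (D : LieDerivation F L L) {j k : ℕ} (hj : j ≤ k) :
    auxS I D j ≤ auxS I D k :=
  auxS_le fun _ hi _ ha => mem_auxS I D (hi.trans hj) ha

lemma auxS_D (I : LieIdeal F L) (D : LieDerivation F L L) {k : ℕ} {x : L}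
    (hx : x ∈ auxS I D k) : D x ∈ auxS I D (k + 1) := by
  have : auxS I D k ≤ (auxS I D (k + 1)).comap D.toLinearMap := by
    refine auxS_le fun j hj a ha => ?_
    change D (D^[j] a) ∈ auxS I D (k + 1)
    rw [← Function.iterate_succ_apply' (⇑D)]
    exact mem_auxS I D (by omega) ha
  exact this hx

lemma auxS_lie (I : LieIdeal F L) (D : LieDerivation F L L) (i : ℕ) {a : L} (ha : a ∈ I) :
    ∀ x : L, ⁅D^[i] a, x⁆ ∈ auxS I D i := by
  induction i with
  | zero => exact fun x => mem_auxS I D (j := 0) le_rfl (lie_mem_left F L I a x ha)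
  | succ i ih =>
    intro x
    have h : ⁅D^[i+1] a, x⁆ = D ⁅D^[i] a, x⁆ - ⁅D^[i] a, D x⁆ := by
      rw [Function.iterate_succ_apply', D.apply_lie_eq_add]; abel
    rw [h]
    exact sub_mem (auxS_D I D (ih x)) (auxS_mono I D (Nat.le_succ i) (ih _))

lemma auxS_lie' (I : LieIdeal F L) (D : LieDerivation F L L) (i : ℕ) {a : L} (ha : a ∈ I)
    (x : L) : ⁅x, D^[i] a⁆ ∈ auxS I D i := by
  rw [← lie_skew]; exact neg_mem (auxS_lie I D i ha x)

lemma auxS_top [CharZero F] (I : LieIdeal F L) (habelian : (⁅I, I⁆ : LieIdeal F L) = ⊥)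
    (D : LieDerivation F L L) (k : ℕ) {a b : L} (ha : a ∈ I) (hb : b ∈ I) :
    ⁅D^[k+1] a, D^[k+1] b⁆ ∈ auxS I D k := by
  have h0 : ⁅a, b⁆ = 0 := by
    have := LieSubmodule.lie_mem_lie ha hb
    rwa [habelian, LieSubmodule.mem_bot] at this
  have h := D.iterate_apply_lie (2 * (k + 1)) a b
  rw [h0, Function.iterate_fixed (map_zero D)] at h
  have hm : (k + 1, k + 1) ∈ Finset.HasAntidiagonal.antidiagonal (2 * (k + 1)) := by simp; omega
  rw [← Finset.add_sum_erase _ _ hm] at h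
  have h2 : (2 * (k+1)).choose (k+1) • ⁅D^[k+1] a, D^[k+1] b⁆ ∈ auxS I D k := by
    rw [eq_neg_of_add_eq_zero_left h.symm]
    refine neg_mem (sum_mem fun ij hij => ?_)
    rw [Finset.mem_erase, Finset.HasAntidiagonal.mem_antidiagonal] at hij
    obtain ⟨hne, hs⟩ := hij
    refine nsmul_mem ?_ _
    rcases le_or_gt ij.1 k with h1 | h1
    · exact auxS_mono I D h1 (auxS_lie I D _ ha _)
    · refine auxS_mono I D ?_ (auxS_lie' I D _ hb _)
      by_contra h3
      exact hne (Prod.ext (by simp; omega) (by simp; omega))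
  rw [← Nat.cast_smul_eq_nsmul F] at h2
  refine (Submodule.smul_mem_iff _ ?_).1 h2
  exact_mod_cast (Nat.choose_pos (by omega)).ne'

lemma auxS_bracket [CharZero F] (I : LieIdeal F L) (habelian : (⁅I, I⁆ : LieIdeal F L) = ⊥)
    (D : LieDerivation F L L) (k : ℕ) {x y : L} (hx : x ∈ auxS I D (k + 1))
    (hy : y ∈ auxS I D (k + 1)) : ⁅x, y⁆ ∈ auxS I D k := by
  have key : ∀ i ≤ k + 1, ∀ a ∈ I, ⁅D^[i] a, y⁆ ∈ auxS I D k := by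
    intro i hi a ha
    have : auxS I D (k + 1) ≤ (auxS I D k).comap (LieAlgebra.ad F L (D^[i] a)) := by
      refine auxS_le fun j hj b hb => ?_
      change ⁅D^[i] a, D^[j] b⁆ ∈ auxS I D k
      rcases Nat.lt_or_ge i (k + 1) with h | h
      · exact auxS_mono I D (by omega) (auxS_lie I D i ha _)
      rcases Nat.lt_or_ge j (k + 1) with h' | h'
      · exact auxS_mono I D (by omega) (auxS_lie' I D j hb _)
      obtain rfl : i = k + 1 := by omega
      obtain rfl : j = k + 1 := by omega
      exact auxS_top I habelian D k ha hb
    exact this hy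
  have : auxS I D (k + 1) ≤ (auxS I D k).comap (LieAlgebra.ad F L y) := by
    refine auxS_le fun i hi a ha => ?_
    change ⁅y, D^[i] a⁆ ∈ auxS I D k
    rw [← lie_skew]; exact neg_mem (key i hi a ha)
  rw [← lie_skew]; exact neg_mem (this hx)

lemma auxS_main [CharZero F] (I : LieIdeal F L) (habelian : (⁅I, I⁆ : LieIdeal F L) = ⊥)
    (D : LieDerivation F L L) (k : ℕ) : ∀ J : LieIdeal F L, J.toSubmodule ≤ auxS I D k →
    LieAlgebra.derivedSeriesOfIdeal F L (k + 1) J = ⊥ := by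
  induction k with
  | zero =>
    intro J hJ
    have hJI : J ≤ I := by
      intro x hx
      exact (auxS_le (P := I.toSubmodule) (fun j hj a ha => by
        obtain rfl : j = 0 := by omega
        exact ha)) (hJ hx)
    rw [LieAlgebra.derivedSeriesOfIdeal_succ, LieAlgebra.derivedSeriesOfIdeal_zero, eq_bot_iff,
      ← habelian]
    exact LieSubmodule.mono_lie hJI hJI
  | succ k ih =>
    intro J hJ
    have : LieAlgebra.derivedSeriesOfIdeal F L (k + 1 + 1) J =
        LieAlgebra.derivedSeriesOfIdeal F L (k + 1) ⁅J, J⁆ := by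
      rw [LieAlgebra.derivedSeriesOfIdeal_add J (k + 1) 1,
        LieAlgebra.derivedSeriesOfIdeal_succ F L J 0, LieAlgebra.derivedSeriesOfIdeal_zero]
    rw [this]
    refine ih _ ?_
    rw [LieSubmodule.lieIdeal_oper_eq_linear_span', Submodule.span_le]
    rintro _ ⟨x, hx, y, hy, rfl⟩
    exact auxS_bracket I habelian D k (hJ hx) (hJ hy)

end Helpers


/-- Let `L` be a Lie algebra over a field `F` of characteristic `0`,
let `I` be an abelian ideal of `L`, and let `D` be a derivation of `L`. Then for every
positive integer `k`, the ideal `J_k = I + D(I) + ⋯ + Dᵏ(I)` is solvable of derived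
length at most `k + 1`. -/
theorem statement10 (F L : Type*) [Field F] [CharZero F] [LieRing L] [LieAlgebra F L]
    (I : LieIdeal F L) (habelian : (⁅I, I⁆ : LieIdeal F L) = ⊥)
    (D : LieDerivation F L L) (k : ℕ) (hk : 0 < k)
    (J : LieIdeal F L)
    (hJ : J.toSubmodule =
      ⨆ j ∈ Finset.range (k + 1), Submodule.map (D.toLinearMap ^ j) I.toSubmodule) :
    LieAlgebra.derivedSeriesOfIdeal F L (k + 1) J = ⊥ := by
  exact auxS_main I habelian D k J hJ.le
end

section
/- Let L be a Lie algebra over a field F of characteristic 0 and let n be a positive integer. Then there exists a real polynomial f_n of degree n such that for every solvable ideal I of L of derived length n, every derivation D of L, and every natural number k, the ideal I + D(I) + ⋯ + Dᵏ(I) is solvable of derived length at most f_n(k). -/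
open LieAlgebra in
/-- The ideal `K + D(K)`. -/
def nextIdeal {F L : Type*} [Field F] [LieRing L] [LieAlgebra F L]
    (D : LieDerivation F L L) (K : LieIdeal F L) : LieIdeal F L :=
  { K.toSubmodule ⊔ Submodule.map D.toLinearMap K.toSubmodule with
    lie_mem := by
      intro x m hm
      change m ∈ K.toSubmodule ⊔ Submodule.map D.toLinearMap K.toSubmodule at hm
      change ⁅x, m⁆ ∈ K.toSubmodule ⊔ Submodule.map D.toLinearMap K.toSubmodule
      obtain ⟨a, ha, c, ⟨b, hb, rfl⟩, rfl⟩ := Submodule.mem_sup.1 hm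
      have h1 : ⁅x, a + D.toLinearMap b⁆ = (⁅x, a⁆ - ⁅D x, b⁆) + D ⁅x, b⁆ := by
        rw [lie_add, LieDerivation.apply_lie_eq_add]
        change ⁅x, a⁆ + ⁅x, D b⁆ = _
        abel
      rw [h1]
      refine Submodule.add_mem_sup ?_ ⟨⁅x, b⁆, K.lie_mem hb, rfl⟩
      exact K.toSubmodule.sub_mem (K.lie_mem ha) (K.lie_mem hb) }

/-- The ideal `I + D(I) + ⋯ + Dᵏ(I)`. -/
def sumIdeal {F L : Type*} [Field F] [LieRing L] [LieAlgebra F L]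
    (D : LieDerivation F L L) (I : LieIdeal F L) : ℕ → LieIdeal F L
  | 0 => I
  | k + 1 => nextIdeal D (sumIdeal D I k)

section
variable {F L : Type*} [Field F] [LieRing L] [LieAlgebra F L]
  (D : LieDerivation F L L) (I : LieIdeal F L)

lemma mem_nextIdeal {K : LieIdeal F L} {x : L} :
    x ∈ nextIdeal D K ↔ ∃ a ∈ K, ∃ b ∈ K, a + D b = x := by
  change x ∈ K.toSubmodule ⊔ Submodule.map D.toLinearMap K.toSubmodule ↔ _
  rw [Submodule.mem_sup]
  constructor
  · rintro ⟨a, ha, c, ⟨b, hb, rfl⟩, rfl⟩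
    exact ⟨a, ha, b, hb, rfl⟩
  · rintro ⟨a, ha, b, hb, rfl⟩
    exact ⟨a, ha, D b, ⟨b, hb, rfl⟩, rfl⟩

lemma sumIdeal_mono : Monotone (sumIdeal D I) := by
  apply monotone_nat_of_le_succ
  intro k x hx
  exact (mem_nextIdeal D).2 ⟨x, hx, 0, zero_mem _, by simp⟩

lemma map_mem_sumIdeal {k : ℕ} {x : L} (hx : x ∈ sumIdeal D I k) :
    D x ∈ sumIdeal D I (k + 1) :=
  (mem_nextIdeal D).2 ⟨0, zero_mem _, x, hx, by simp⟩

lemma iter_mem_sumIdeal {x : L} (hx : x ∈ I) (k : ℕ) : D^[k] x ∈ sumIdeal D I k := by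
  induction k with
  | zero => exact hx
  | succ k ih =>
    rw [Function.iterate_succ_apply']
    exact map_mem_sumIdeal D I ih

lemma exists_of_mem_sumIdeal_succ (k : ℕ) : ∀ x ∈ sumIdeal D I (k + 1),
    ∃ y ∈ sumIdeal D I k, ∃ a ∈ I, x = y + D^[k + 1] a := by
  induction k with
  | zero =>
    intro x hx
    obtain ⟨a, ha, b, hb, rfl⟩ := (mem_nextIdeal D).1 hx
    exact ⟨a, ha, b, hb, rfl⟩
  | succ k ih =>
    intro x hx
    obtain ⟨a, ha, b, hb, rfl⟩ := (mem_nextIdeal D).1 hx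
    obtain ⟨y, hy, c, hc, rfl⟩ := ih b hb
    refine ⟨a + D y, add_mem ha (map_mem_sumIdeal D I hy), c, hc, ?_⟩
    rw [Function.iterate_succ_apply' _ (k + 1), map_add, add_assoc]

lemma lie_iter_mem [CharZero F] (M : LieIdeal F L) (k : ℕ)
    (hM : sumIdeal D ⁅I, I⁆ (2 * (k + 1)) ≤ M) {a b : L} (ha : a ∈ I) (hb : b ∈ I) :
    ⁅D^[k + 1] a, D^[k + 1] b⁆ ∈ sumIdeal D I k ⊔ M := by
  have h1 : D^[2 * (k + 1)] ⁅a, b⁆ ∈ sumIdeal D I k ⊔ M :=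
    (le_sup_right : M ≤ _) (hM (iter_mem_sumIdeal D _ (LieSubmodule.lie_mem_lie ha hb) _))
  rw [LieDerivation.iterate_apply_lie] at h1
  have hmem : (k + 1, k + 1) ∈ Finset.HasAntidiagonal.antidiagonal (2 * (k + 1)) := by
    rw [Finset.HasAntidiagonal.mem_antidiagonal]; omega
  rw [← Finset.add_sum_erase _ _ hmem] at h1
  have h2 : ∑ ij ∈ (Finset.HasAntidiagonal.antidiagonal (2 * (k + 1))).erase (k + 1, k + 1),
      (2 * (k + 1)).choose ij.1 • ⁅D^[ij.1] a, D^[ij.2] b⁆ ∈ sumIdeal D I k ⊔ M := by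
    apply sum_mem
    rintro ⟨i, j⟩ hij
    rw [Finset.mem_erase, Finset.HasAntidiagonal.mem_antidiagonal] at hij
    obtain ⟨hne, hs⟩ := hij
    dsimp only at hs ⊢
    apply nsmul_mem
    apply (le_sup_left : sumIdeal D I k ≤ _)
    by_cases hi : i ≤ k
    · exact lie_mem_left F L _ _ _ (sumIdeal_mono D I hi (iter_mem_sumIdeal D I ha i))
    · have hj : j ≤ k := by
        by_contra hj
        apply hne
        rw [Prod.mk.injEq]
        omega
      exact lie_mem_right F L _ _ _ (sumIdeal_mono D I hj (iter_mem_sumIdeal D I hb j))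
  have h3 := (add_mem_cancel_right h2).1 h1
  dsimp only at h3
  rw [← Nat.cast_smul_eq_nsmul F] at h3
  have hc : ((2 * (k + 1)).choose (k + 1) : F) ≠ 0 := by
    rw [Nat.cast_ne_zero]
    exact (Nat.choose_pos (by omega)).ne'
  have h4 := (sumIdeal D I k ⊔ M).toSubmodule.smul_mem
    ((2 * (k + 1)).choose (k + 1) : F)⁻¹ h3
  rwa [inv_smul_smul₀ hc] at h4

lemma lie_sumIdeal_succ_le [CharZero F] (M : LieIdeal F L) (k : ℕ)
    (hM : sumIdeal D ⁅I, I⁆ (2 * (k + 1)) ≤ M) :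
    ⁅sumIdeal D I (k + 1), sumIdeal D I (k + 1)⁆ ≤ sumIdeal D I k ⊔ M := by
  rw [LieSubmodule.lie_le_iff]
  intro x hx y hy
  obtain ⟨u, hu, a, ha, rfl⟩ := exists_of_mem_sumIdeal_succ D I k x hx
  obtain ⟨v, hv, b, hb, rfl⟩ := exists_of_mem_sumIdeal_succ D I k y hy
  have hle : sumIdeal D I k ≤ sumIdeal D I k ⊔ M := le_sup_left
  rw [add_lie, lie_add (D^[k + 1] a)]
  exact add_mem (hle (lie_mem_left F L _ _ _ hu))
    (add_mem (hle (lie_mem_right F L _ _ _ hv)) (lie_iter_mem D I M k hM ha hb))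

lemma lie_sup_le (A M : LieIdeal F L) : ⁅A ⊔ M, A ⊔ M⁆ ≤ ⁅A, A⁆ ⊔ M := by
  rw [LieSubmodule.sup_lie, LieSubmodule.lie_sup]
  refine sup_le (sup_le le_sup_left ?_) ?_
  · exact (LieSubmodule.lie_le_right M A).trans le_sup_right
  · exact (LieSubmodule.lie_le_left M (A ⊔ M)).trans le_sup_right

open LieAlgebra in
lemma derived_le_s14 [CharZero F] (M : LieIdeal F L) (k : ℕ) :
    sumIdeal D ⁅I, I⁆ (2 * k) ≤ M → ∀ K : LieIdeal F L, K ≤ sumIdeal D I k ⊔ M →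
      derivedSeriesOfIdeal F L (k + 1) K ≤ M := by
  induction k with
  | zero =>
    intro hM K hK
    rw [derivedSeriesOfIdeal_succ]
    refine (LieSubmodule.mono_lie hK hK).trans ((lie_sup_le _ _).trans (sup_le ?_ le_rfl))
    exact hM
  | succ k ih =>
    intro hM K hK
    rw [derivedSeriesOfIdeal_add]
    refine ih ((sumIdeal_mono D _ (by omega)).trans hM) _ ?_
    rw [derivedSeriesOfIdeal_succ]
    refine (LieSubmodule.mono_lie hK hK).trans ((lie_sup_le _ _).trans (sup_le ?_ le_sup_right))
    exact lie_sumIdeal_succ_le D I M k hM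

lemma sumIdeal_bot (k : ℕ) : sumIdeal D (⊥ : LieIdeal F L) k = ⊥ := by
  induction k with
  | zero => rfl
  | succ k ih =>
    rw [eq_bot_iff]
    intro x hx
    obtain ⟨a, ha, b, hb, rfl⟩ := (mem_nextIdeal D).1 hx
    rw [ih, LieSubmodule.mem_bot] at ha hb
    simp [ha, hb]

open LieAlgebra in
lemma derived_sumIdeal [CharZero F] (n : ℕ) : ∀ (I : LieIdeal F L),
    derivedSeriesOfIdeal F L n I = ⊥ → ∀ k : ℕ,
      derivedSeriesOfIdeal F L (4 ^ n * (k + 1)) (sumIdeal D I k) = ⊥ := by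
  induction n with
  | zero =>
    intro I hI k
    have hI' : I = ⊥ := hI
    subst hI'
    rw [sumIdeal_bot, eq_bot_iff]
    exact derivedSeriesOfIdeal_le_self _ _
  | succ n ih =>
    intro I hI k
    rw [derivedSeriesOfIdeal_add] at hI
    have h1 := ih ⁅I, I⁆ hI (2 * k)
    have h2 := derived_le_s14 D I (sumIdeal D ⁅I, I⁆ (2 * k)) k le_rfl (sumIdeal D I k) le_sup_left
    have h3 : 4 ^ n * (2 * k + 1) + (k + 1) ≤ 4 ^ (n + 1) * (k + 1) := by
      have : 1 ≤ 4 ^ n := Nat.one_le_pow _ _ (by norm_num)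
      rw [pow_succ]
      nlinarith
    rw [eq_bot_iff]
    refine (derivedSeriesOfIdeal_antitone _ h3).trans ?_
    rw [derivedSeriesOfIdeal_add, ← h1]
    exact derivedSeriesOfIdeal_mono h2 _

end


/-- Let `L` be a Lie algebra over a field `F` of characteristic `0` and
let `n` be a positive integer. Then there exists a real polynomial `f_n` of degree `n`
such that for every solvable ideal `I` of `L` of derived length `n`, every derivation `D`
of `L`, and every natural number `k`, the ideal `I + D(I) + ⋯ + Dᵏ(I)` is solvable of
derived length at most `f_n(k)`. -/
theorem statement14 (F L : Type*) [Field F] [CharZero F] [LieRing L] [LieAlgebra F L]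
    (n : ℕ) (hn : 0 < n) :
    ∃ f : Polynomial ℝ, f.degree = n ∧
      ∀ I : LieIdeal F L,
        LieAlgebra.derivedSeriesOfIdeal F L n I = ⊥ →
        (∀ m < n, LieAlgebra.derivedSeriesOfIdeal F L m I ≠ ⊥) →
        ∀ D : LieDerivation F L L, ∀ k : ℕ,
          ∀ J : LieIdeal F L,
            J.toSubmodule =
              (⨆ j ∈ Finset.range (k + 1), Submodule.map (D.toLinearMap ^ j) I.toSubmodule) →
            LieAlgebra.derivedSeriesOfIdeal F L ⌊f.eval (k : ℝ)⌋₊ J = ⊥ := by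
  refine ⟨Polynomial.C ((4 : ℝ) ^ n) * (Polynomial.X + Polynomial.C 1) ^ n, ?_, ?_⟩
  · rw [Polynomial.degree_C_mul (by positivity), Polynomial.degree_pow,
      Polynomial.degree_X_add_C]
    simp
  · intro I hI _ D k J hJ
    have hle : J ≤ sumIdeal D I k := by
      rw [← LieSubmodule.toSubmodule_le_toSubmodule, hJ]
      refine iSup₂_le ?_
      rintro j hj _ ⟨a, ha, rfl⟩
      rw [Finset.mem_range] at hj
      have h := sumIdeal_mono D I (by omega : j ≤ k) (iter_mem_sumIdeal D I ha j)
      rw [Module.End.pow_apply]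
      exact h
    have hfl : 4 ^ n * (k + 1) ≤ ⌊(Polynomial.C ((4 : ℝ) ^ n) *
        (Polynomial.X + Polynomial.C 1) ^ n).eval (k : ℝ)⌋₊ := by
      apply Nat.le_floor
      simp only [Polynomial.eval_mul, Polynomial.eval_C, Polynomial.eval_pow,
        Polynomial.eval_add, Polynomial.eval_X]
      push_cast
      refine mul_le_mul_of_nonneg_left ?_ (by positivity)
      exact le_self_pow₀ (by linarith [Nat.cast_nonneg (α := ℝ) k]) hn.ne'
    rw [eq_bot_iff, ← derived_sumIdeal D n I hI k]
    exact LieAlgebra.derivedSeriesOfIdeal_le hle hfl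
end
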